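/- Let T=(V,E) be a leafless directed tree with a root, let 1 < q < ∞, let λ be the constant sequence λ_v = 1 for each v ∈ V, and assume the backward shift B is bounded on L^q(T,λ). Then B is hypercyclic if and only if the tree T has no free ends. -/

import Mathlib

open Filter

attribute [local instance] Classical.propDecidable
open scoped ENNReal

/-- A directed tree: a locally finite directed graph on a (countably infinite)
vertex set with no directed circuits, whose underlying undirected graph is
connected, and in which every vertex has indegree at most one. -/
structure DirTree (V : Type) where
  E : V → V → Prop
  finIn : ∀ v : V, {u : V | E u v}.Finite
  finOut : ∀ v : V, {u : V | E v u}.Finite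
  noCircuit : ∀ (n : ℕ) (c : Fin (n + 1) → V), Function.Injective c →
    (∀ i : Fin n, E (c i.castSucc) (c i.succ)) → ¬ E (c (Fin.last n)) (c 0)
  conn : (SimpleGraph.fromRel E).Connected
  indeg : ∀ ⦃u w v : V⦄, E u v → E w v → u = w

namespace DirTree

variable {V : Type} (T : DirTree V)

/-- A root is a vertex of indegree zero. -/
def IsRoot (r : V) : Prop := ∀ u : V, ¬ T.E u r

/-- The set of children of a vertex. -/
def child (u : V) : Set V := {v : V | T.E u v}

/-- A leaf is a vertex of outdegree zero. -/
def IsLeaf (u : V) : Prop := ¬ (T.child u).Nonempty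

/-- The (forward) shift `(S f)(v) = f (parent v)`, with `(S f)(root) = 0`. -/
noncomputable def shift (f : V → ℂ) (v : V) : ℂ :=
  if h : ∃ u : V, T.E u v then f h.choose else 0

/-- The backward shift `(B f)(u) = ∑_{v ∈ child u} f v`. -/
noncomputable def bwd (f : V → ℂ) (u : V) : ℂ :=
  ∑' v : T.child u, f v.1

/-- The operator `(S* g)(u) = ∑_{v ∈ child u} g v · λ_v / λ_u`. -/
noncomputable def sstar (lam : V → ℝ) (g : V → ℂ) (u : V) : ℂ :=
  ∑' v : T.child u, g v.1 * ((lam v.1 / lam u : ℝ) : ℂ)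

/-- `childN n u` is the set of vertices `v` with `parentⁿ v = u`. -/
def childN (T : DirTree V) : ℕ → V → Set V
  | 0, u => {u}
  | n + 1, u => {w : V | ∃ v ∈ T.child u, w ∈ childN T n v}

/-- `γ(u,n)`, the cardinality of `childN n u`. -/
noncomputable def gam (u : V) (n : ℕ) : ℕ := (T.childN n u).ncard

/-- The `n`-th ancestor `parentⁿ u` of `u` (junk value `u` if it does not exist). -/
noncomputable def anc (u : V) (n : ℕ) : V :=
  if h : ∃ w : V, u ∈ T.childN n w then h.choose else u

/-- A leafless directed tree has a free end if some vertex is such that all of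
its descendants have outdegree one. -/
def FreeEnd : Prop :=
  ∃ w : V, ∀ n : ℕ, 0 < n → ∀ v ∈ T.childN n w, (T.child v).ncard = 1

end DirTree

/-- Membership in the weighted space `L^p(T,λ)`. -/
def MemLp' {V : Type} (lam : V → ℝ) (p : ℝ) (f : V → ℂ) : Prop :=
  Summable (fun v => ‖f v‖ ^ p * lam v)

/-- The norm of the weighted space `L^p(T,λ)`. -/
noncomputable def pNorm {V : Type} (lam : V → ℝ) (p : ℝ) (f : V → ℂ) : ℝ :=
  (∑' v, ‖f v‖ ^ p * lam v) ^ (1 / p)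

/-- Boundedness of an operator on `L^p(T,λ)`. -/
def BoundedOn {V : Type} (lam : V → ℝ) (p : ℝ) (A : (V → ℂ) → (V → ℂ)) : Prop :=
  ∃ C : ℝ, 0 ≤ C ∧ ∀ f : V → ℂ, MemLp' lam p f →
    MemLp' lam p (A f) ∧ pNorm lam p (A f) ≤ C * pNorm lam p f

/-- Hypercyclicity of an operator on `L^p(T,λ)`: some `f ∈ L^p(T,λ)` has dense
orbit `{Aⁿ f : n ∈ ℕ}`. -/
def Hypercyclic {V : Type} (lam : V → ℝ) (p : ℝ) (A : (V → ℂ) → (V → ℂ)) : Prop :=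
  ∃ f : V → ℂ, MemLp' lam p f ∧ ∀ g : V → ℂ, MemLp' lam p g → ∀ ε : ℝ, 0 < ε →
    ∃ n : ℕ, MemLp' lam p (A^[n] f - g) ∧ pNorm lam p (A^[n] f - g) < ε

/-! ## An abstract hypercyclicity criterion -/

/-- A hypercyclicity criterion, proved with the Baire category theorem. -/
theorem hc_criterion {X : Type*} [NormedAddCommGroup X] [NormedSpace ℂ X] [CompleteSpace X]
    [TopologicalSpace.SeparableSpace X] (B : X →L[ℂ] X) (D : Set X) (hD : Dense D)
    (h0 : ∀ x ∈ D, Tendsto (fun n => (B ^ n) x) atTop (nhds 0))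
    (h1 : ∀ y ∈ D, ∃ s : ℕ → X, Tendsto s atTop (nhds 0) ∧ ∀ n, (B ^ n) (s n) = y) :
    ∃ f : X, ∀ g : X, ∀ ε : ℝ, 0 < ε → ∃ n : ℕ, ‖(B ^ n) f - g‖ < ε := by
  let d := TopologicalSpace.denseSeq X
  let G : ℕ × ℕ → Set X := fun km =>
    ⋃ n : ℕ, (fun x => (B ^ n) x) ⁻¹' Metric.ball (d km.1) (1 / ((km.2 : ℝ) + 1))
  have ho : ∀ km, IsOpen (G km) := fun km =>
    isOpen_iUnion fun n => Metric.isOpen_ball.preimage (B ^ n).continuous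
  have hd : ∀ km, Dense (G km) := by
    rintro ⟨k, m⟩
    rw [Metric.dense_iff]
    intro x0 r hr
    have hm : (0 : ℝ) < 1 / ((m : ℝ) + 1) := by positivity
    obtain ⟨x, hx, hxD⟩ := Metric.dense_iff.1 hD x0 r hr
    obtain ⟨y, hy, hyD⟩ := Metric.dense_iff.1 hD (d k) _ hm
    obtain ⟨s, hs0, hs⟩ := h1 y hyD
    have t1 : Tendsto (fun n => x + s n) atTop (nhds x) := by
      simpa using tendsto_const_nhds.add hs0
    have t2 : Tendsto (fun n => (B ^ n) (x + s n)) atTop (nhds y) := by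
      simpa [map_add, hs] using (h0 x hxD).add_const y
    have e1 := t1.eventually (Metric.isOpen_ball.mem_nhds hx)
    have e2 := t2.eventually (Metric.isOpen_ball.mem_nhds hy)
    obtain ⟨n, hn1, hn2⟩ := (e1.and e2).exists
    exact ⟨x + s n, hn1, Set.mem_iUnion.2 ⟨n, hn2⟩⟩
  obtain ⟨f, hf⟩ := (dense_iInter_of_isOpen ho hd).nonempty
  refine ⟨f, fun g ε hε => ?_⟩
  obtain ⟨m, hm⟩ := exists_nat_one_div_lt (half_pos hε)
  obtain ⟨_, hk, k, rfl⟩ :=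
    Metric.dense_iff.1 (TopologicalSpace.denseRange_denseSeq X) g (ε / 2) (half_pos hε)
  obtain ⟨n, hn⟩ := Set.mem_iUnion.1 (Set.mem_iInter.1 hf (k, m))
  refine ⟨n, ?_⟩
  have hn' : dist ((B ^ n) f) (d k) < 1 / ((m : ℝ) + 1) := hn
  have hk' : dist (d k) g < ε / 2 := hk
  rw [← dist_eq_norm]
  linarith [dist_triangle ((B ^ n) f) (d k) g]

/-! ## Combinatorics of the tree -/

namespace DirTree

variable {V : Type} (T : DirTree V)

theorem childN_succ_eq (n : ℕ) (u : V) :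
    T.childN (n + 1) u = ⋃ v ∈ T.child u, T.childN n v := by
  ext w; simp [childN]

theorem childN_finite (n : ℕ) (u : V) : (T.childN n u).Finite := by
  induction n generalizing u with
  | zero => exact Set.finite_singleton u
  | succ n ih =>
    rw [childN_succ_eq]
    exact (T.finOut u).biUnion fun v _ => ih v

theorem childN_add {m n : ℕ} {u v w : V} (h1 : v ∈ T.childN m u) (h2 : w ∈ T.childN n v) :
    w ∈ T.childN (m + n) u := by
  induction m generalizing u with
  | zero =>
    have : v = u := h1
    subst this
    simpa using h2
  | succ m ih =>
    obtain ⟨x, hx, hvx⟩ := h1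
    rw [Nat.succ_add]
    exact ⟨x, hx, ih hvx⟩

theorem childN_one {u v : V} (h : T.E u v) : v ∈ T.childN 1 u := ⟨v, h, rfl⟩

theorem childN_succ' {n : ℕ} {u v w : V} (h1 : v ∈ T.childN n u) (h2 : T.E v w) :
    w ∈ T.childN (n + 1) u := T.childN_add h1 (T.childN_one h2)

theorem childN_succ_split {n : ℕ} {u w : V} (h : w ∈ T.childN (n + 1) u) :
    ∃ v ∈ T.childN n u, T.E v w := by
  induction n generalizing u with
  | zero =>
    obtain ⟨x, hx, hw⟩ := h
    have : w = x := hw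
    subst this
    exact ⟨u, rfl, hx⟩
  | succ n ih =>
    obtain ⟨x, hx, hw⟩ := h
    obtain ⟨v, hv, hvw⟩ := ih hw
    exact ⟨v, ⟨x, hx, hv⟩, hvw⟩

theorem childN_unique {n : ℕ} {u u' w : V} (h : w ∈ T.childN n u) (h' : w ∈ T.childN n u') :
    u = u' := by
  induction n generalizing w with
  | zero => exact (show w = u from h).symm.trans h'
  | succ n ih =>
    obtain ⟨v, hv, hvw⟩ := T.childN_succ_split h
    obtain ⟨v', hv', hvw'⟩ := T.childN_succ_split h'
    have := T.indeg hvw hvw'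
    subst this
    exact ih hv hv'

theorem bwd_eq (f : V → ℂ) (u : V) : T.bwd f u = ∑ᶠ v ∈ T.child u, f v := by
  have hfin : (T.child u).Finite := T.finOut u
  have := hfin.to_subtype
  have := Fintype.ofFinite (T.child u)
  rw [bwd, tsum_fintype, ← finsum_eq_sum_of_fintype, finsum_set_coe_eq_finsum_mem (f := f)]

theorem bwd_iter (n : ℕ) (f : V → ℂ) (u : V) :
    T.bwd^[n] f u = ∑ᶠ v ∈ T.childN n u, f v := by
  induction n generalizing u with
  | zero => simp [childN]
  | succ n ih =>
    rw [Function.iterate_succ', Function.comp_apply, bwd_eq, childN_succ_eq,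
      finsum_mem_biUnion]
    · simp_rw [ih]
    · intro a _ b _ hab
      exact Set.disjoint_left.2 fun w hw hw' => hab (T.childN_unique hw hw')
    · exact T.finOut u
    · exact fun v _ => T.childN_finite n v

theorem depth_bound {r : V} (hr : T.IsRoot r) (v : V) :
    ∃ N : ℕ, ∀ n, N ≤ n → ∀ u, v ∉ T.childN n u := by
  have hreach := T.conn.preconnected r v
  rw [SimpleGraph.reachable_iff_reflTransGen] at hreach
  induction hreach with
  | refl =>
    refine ⟨1, fun n hn u hu => ?_⟩
    obtain ⟨n, rfl⟩ := Nat.exists_eq_add_of_le' hn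
    obtain ⟨x, -, hx⟩ := T.childN_succ_split hu
    exact hr x hx
  | @tail b c _ hbc ih =>
    obtain ⟨N, hN⟩ := ih
    rw [SimpleGraph.fromRel_adj] at hbc
    rcases hbc.2 with h | h
    · refine ⟨N + 1, fun n hn u hu => ?_⟩
      obtain ⟨n, rfl⟩ := Nat.exists_eq_add_of_le' (le_trans (Nat.le_add_left 1 N) hn)
      obtain ⟨x, hx, hxc⟩ := T.childN_succ_split hu
      have := T.indeg hxc h
      subst this
      exact hN n (by omega) u hx
    · exact ⟨N, fun n hn u hu => hN (n + 1) (by omega) u (T.childN_succ' hu h)⟩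

theorem gam_tendsto (hleafless : ∀ u : V, ¬ T.IsLeaf u) (hfree : ¬ T.FreeEnd) (u : V) :
    Tendsto (T.gam u) atTop atTop := by
  have hne : ∀ u, ∃ v, T.E u v := fun u => not_not.1 (hleafless u)
  choose c hc using hne
  have cinj : Function.Injective c := fun a b hab => by
    have h1 := hc a
    rw [hab] at h1
    exact T.indeg h1 (hc b)
  have himg : ∀ n, c '' T.childN n u ⊆ T.childN (n + 1) u := by
    rintro n _ ⟨v, hv, rfl⟩
    exact T.childN_succ' hv (hc v)
  have hmono : Monotone (T.gam u) := by
    refine monotone_nat_of_le_succ fun n => ?_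
    rw [gam, gam, ← Set.ncard_image_of_injective _ cinj]
    exact Set.ncard_le_ncard (himg n) (T.childN_finite _ _)
  have hnonempty : ∀ n, (T.childN n u).Nonempty := by
    intro n
    induction n with
    | zero => exact ⟨u, rfl⟩
    | succ n ih => obtain ⟨v, hv⟩ := ih; exact ⟨c v, T.childN_succ' hv (hc v)⟩
  have hinc : ∀ n, ∃ m, n ≤ m ∧ T.gam u m < T.gam u (m + 1) := by
    intro n
    obtain ⟨v, hv⟩ := hnonempty n
    simp only [FreeEnd, not_exists] at hfree
    have := hfree v
    push Not at this
    obtain ⟨k, -, w, hw, hcard⟩ := this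
    refine ⟨n + k, Nat.le_add_right _ _, ?_⟩
    have hwu := T.childN_add hv hw
    have hex : ∃ x, T.E w x ∧ x ≠ c w := by
      by_contra hcon
      push Not at hcon
      apply hcard
      rw [Set.ncard_eq_one]
      refine ⟨c w, Set.eq_singleton_iff_unique_mem.2 ⟨hc w, fun x hx => hcon x hx⟩⟩
    obtain ⟨x, hx, hxc⟩ := hex
    rw [gam, gam, ← Set.ncard_image_of_injective _ cinj]
    refine Set.ncard_lt_ncard ⟨himg _, fun hsub => ?_⟩ (T.childN_finite _ _)
    obtain ⟨y, -, hyx⟩ := hsub (T.childN_succ' hwu hx)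
    have h1 := hc y
    rw [hyx] at h1
    have := T.indeg h1 hx
    subst this
    exact hxc hyx.symm
  refine tendsto_atTop_atTop_of_monotone hmono fun b => ?_
  induction b with
  | zero => exact ⟨0, Nat.zero_le _⟩
  | succ b ih =>
    obtain ⟨a, ha⟩ := ih
    obtain ⟨m, hm, hlt⟩ := hinc a
    exact ⟨m + 1, by have := hmono hm; omega⟩

end DirTree

/-! ## Transfer between `L^q` and Mathlib's `lp` -/

theorem memLp'_iff {V : Type} {q : ℝ} (hq : 1 < q) (f : V → ℂ) :
    MemLp' (fun _ : V => (1 : ℝ)) q f ↔ Memℓp f (ENNReal.ofReal q) := by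
  have hq0 : (ENNReal.ofReal q).toReal = q := ENNReal.toReal_ofReal (by linarith)
  rw [memℓp_gen_iff (by rw [hq0]; linarith), hq0]
  simp [MemLp']

theorem pNorm_eq {V : Type} {q : ℝ} (hq : 1 < q) (f : lp (fun _ : V => ℂ) (ENNReal.ofReal q)) :
    pNorm (fun _ : V => (1 : ℝ)) q f = ‖f‖ := by
  have hq0 : (ENNReal.ofReal q).toReal = q := ENNReal.toReal_ofReal (by linarith)
  rw [lp.norm_eq_tsum_rpow (by rw [hq0]; linarith), hq0]
  simp [pNorm]

theorem bwd_add {V : Type} (T : DirTree V) (f g : V → ℂ) :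
    T.bwd (f + g) = T.bwd f + T.bwd g := by
  ext u
  simp only [T.bwd_eq, Pi.add_apply]
  exact finsum_mem_add_distrib (T.finOut u)

theorem bwd_smul {V : Type} (T : DirTree V) (c : ℂ) (f : V → ℂ) :
    T.bwd (c • f) = c • T.bwd f := by
  ext u
  simp only [DirTree.bwd, Pi.smul_apply, smul_eq_mul]
  exact tsum_mul_left

theorem exists_clm {V : Type} (T : DirTree V) {q : ℝ} (hq : 1 < q)
    [Fact (1 ≤ ENNReal.ofReal q)]
    (hb : BoundedOn (fun _ : V => (1 : ℝ)) q T.bwd) :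
    ∃ B : lp (fun _ : V => ℂ) (ENNReal.ofReal q) →L[ℂ] lp (fun _ : V => ℂ) (ENNReal.ofReal q),
      ∀ f, ((B f : lp (fun _ : V => ℂ) (ENNReal.ofReal q)) : V → ℂ) = T.bwd f := by
  obtain ⟨C, -, hC⟩ := hb
  have hmem : ∀ f : lp (fun _ : V => ℂ) (ENNReal.ofReal q),
      Memℓp (T.bwd f) (ENNReal.ofReal q) := fun f =>
    (memLp'_iff hq _).1 (hC f ((memLp'_iff hq _).2 (lp.memℓp f))).1
  let L : lp (fun _ : V => ℂ) (ENNReal.ofReal q) →ₗ[ℂ] lp (fun _ : V => ℂ) (ENNReal.ofReal q) :=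
    { toFun := fun f => ⟨T.bwd f, hmem f⟩
      map_add' := fun f g => by
        apply lp.ext
        exact bwd_add T f g
      map_smul' := fun c f => by
        apply lp.ext
        exact bwd_smul T c f }
  refine ⟨L.mkContinuous C fun f => ?_, fun f => rfl⟩
  rw [← pNorm_eq hq, ← pNorm_eq hq]
  exact (hC f ((memLp'_iff hq _).2 (lp.memℓp f))).2

theorem not_freeEnd_of_hc {V : Type} (T : DirTree V)
    (hleafless : ∀ u : V, ¬ T.IsLeaf u) (q : ℝ) (hq : 1 < q)
    (h : Hypercyclic (fun _ : V => (1 : ℝ)) q T.bwd) : ¬ T.FreeEnd := by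
  rintro ⟨w, hw⟩
  have : Fact (1 ≤ ENNReal.ofReal q) := ⟨by simpa using ENNReal.ofReal_le_ofReal hq.le⟩
  have hp0 : ENNReal.ofReal q ≠ 0 := (lt_of_lt_of_le zero_lt_one Fact.out).ne'
  obtain ⟨f, hf, hdense⟩ := h
  obtain ⟨v, hv⟩ := not_not.1 (hleafless w)
  have hsing : ∀ n, ∃ x, T.childN n v = {x} := by
    intro n
    induction n with
    | zero => exact ⟨v, rfl⟩
    | succ n ih =>
      obtain ⟨x, hx⟩ := ih
      have hxv : x ∈ T.childN n v := by rw [hx]; rfl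
      have hxw : x ∈ T.childN (n + 1) w := ⟨v, hv, hxv⟩
      obtain ⟨y, hy⟩ := Set.ncard_eq_one.1 (hw (n + 1) (Nat.succ_pos n) x hxw)
      refine ⟨y, Set.eq_singleton_iff_unique_mem.2 ⟨?_, fun z hz => ?_⟩⟩
      · exact T.childN_succ' hxv (show y ∈ T.child x by rw [hy]; rfl)
      · obtain ⟨x', hx', hE⟩ := T.childN_succ_split hz
        rw [hx] at hx'
        have : x' = x := hx'
        subst this
        have hz' : z ∈ T.child x' := hE
        rw [hy] at hz'
        exact hz'
  let F : lp (fun _ : V => ℂ) (ENNReal.ofReal q) := ⟨f, (memLp'_iff hq f).1 hf⟩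
  let g : lp (fun _ : V => ℂ) (ENNReal.ofReal q) :=
    lp.single (ENNReal.ofReal q) v ((‖F‖ + 1 : ℝ) : ℂ)
  obtain ⟨n, hn1, hn2⟩ := hdense g ((memLp'_iff hq _).2 (lp.memℓp g)) 1 one_pos
  let H : lp (fun _ : V => ℂ) (ENNReal.ofReal q) := ⟨_, (memLp'_iff hq _).1 hn1⟩
  have hH : ‖H‖ < 1 := by
    rw [← pNorm_eq hq]; exact hn2
  obtain ⟨x, hx⟩ := hsing n
  have hval : H v = F x - ((‖F‖ + 1 : ℝ) : ℂ) := by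
    show T.bwd^[n] f v - g v = _
    rw [T.bwd_iter, hx, finsum_mem_singleton]
    simp [g, F]
  have h1 := lp.norm_apply_le_norm hp0 H v
  have h2 := lp.norm_apply_le_norm hp0 F x
  have h3 : ‖((‖F‖ + 1 : ℝ) : ℂ)‖ = ‖F‖ + 1 := by
    rw [Complex.norm_real, Real.norm_of_nonneg (by positivity)]
  have h4 := norm_sub_norm_le ((‖F‖ + 1 : ℝ) : ℂ) (F x)
  rw [hval, norm_sub_rev] at h1
  linarith

theorem lp_sum_single_apply {V : Type} (p : ℝ≥0∞) (S : Finset V) (a : ℂ) (v : V) :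
    (∑ w ∈ S, lp.single (E := fun _ : V => ℂ) p w a) v = if v ∈ S then a else 0 := by
  rw [lp.coeFn_sum, Finset.sum_apply]
  simp only [lp.single_apply]
  exact Finset.sum_pi_single v (fun _ => a) S

theorem hc_of_not_freeEnd {V : Type} [Countable V] (T : DirTree V)
    (hleafless : ∀ u : V, ¬ T.IsLeaf u) (hroot : ∃ r : V, T.IsRoot r)
    (q : ℝ) (hq : 1 < q) (hb : BoundedOn (fun _ : V => (1 : ℝ)) q T.bwd)
    (hfree : ¬ T.FreeEnd) : Hypercyclic (fun _ : V => (1 : ℝ)) q T.bwd := by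
  have : Fact (1 ≤ ENNReal.ofReal q) := ⟨by simpa using ENNReal.ofReal_le_ofReal hq.le⟩
  have hq0 : (ENNReal.ofReal q).toReal = q := ENNReal.toReal_ofReal (by linarith)
  obtain ⟨r, hr⟩ := hroot
  obtain ⟨B, hB⟩ := exists_clm T hq hb
  let X := lp (fun _ : V => ℂ) (ENNReal.ofReal q)
  have hBn : ∀ (n : ℕ) (f : X), (((B ^ n) f : X) : V → ℂ) = T.bwd^[n] f := by
    intro n f
    induction n with
    | zero => rfl
    | succ n ih =>
      rw [pow_succ', Function.iterate_succ', Function.comp_apply, ← ih, ← hB]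
      rfl
  let e : V → X := fun v => lp.single (ENNReal.ofReal q) v (1 : ℂ)
  let D : Submodule ℂ X := Submodule.span ℂ (Set.range e)
  have hsm : ∀ (v : V) (a : ℂ), lp.single (ENNReal.ofReal q) v a = a • e v := by
    intro v a
    show _ = a • lp.single (E := fun _ : V => ℂ) (ENNReal.ofReal q) v (1 : ℂ)
    rw [← lp.single_smul]
    simp
  have hD : Dense (D : Set X) := by
    intro f
    have hs := lp.hasSum_single (p := ENNReal.ofReal q) ENNReal.ofReal_ne_top f
    refine mem_closure_of_tendsto hs (Eventually.of_forall fun s => ?_)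
    refine D.sum_mem fun v _ => ?_
    rw [hsm]
    exact D.smul_mem _ (Submodule.subset_span ⟨v, rfl⟩)
  have : TopologicalSpace.SeparableSpace X :=
    hD.isSeparable_iff.1 (Set.countable_range e).isSeparable.span
  have h0 : ∀ x ∈ D, Tendsto (fun n => (B ^ n) x) atTop (nhds 0) := by
    intro x hx
    induction hx using Submodule.span_induction with
    | mem x hx =>
      obtain ⟨v, rfl⟩ := hx
      obtain ⟨N, hN⟩ := T.depth_bound hr v
      refine tendsto_const_nhds.congr' ?_
      filter_upwards [eventually_ge_atTop N] with n hn
      apply lp.ext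
      rw [hBn]
      ext u
      rw [T.bwd_iter]
      symm
      apply finsum_mem_eq_zero_of_forall_eq_zero
      intro x hx
      have : x ≠ v := fun h => hN n hn u (h ▸ hx)
      exact lp.single_apply_ne _ _ _ this
    | zero => simp
    | add x y _ _ hx hy => simpa using hx.add hy
    | smul a x _ hx => simpa using hx.const_smul a
  have h1 : ∀ y ∈ D, ∃ s : ℕ → X, Tendsto s atTop (nhds 0) ∧ ∀ n, (B ^ n) (s n) = y := by
    intro y hy
    induction hy using Submodule.span_induction with
    | mem x hx =>
      obtain ⟨u, rfl⟩ := hx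
      let S : ℕ → Finset V := fun n => (T.childN_finite n u).toFinset
      have hScard : ∀ n, (S n).card = T.gam u n := fun n =>
        (Set.ncard_eq_toFinset_card _ (T.childN_finite n u)).symm
      have hgt := T.gam_tendsto hleafless hfree u
      have hgpos : ∀ n, T.gam u n ≠ 0 := by
        intro n
        have hne : (T.childN n u).Nonempty := by
          induction n with
          | zero => exact ⟨u, rfl⟩
          | succ n ih =>
            obtain ⟨v, hv⟩ := ih
            obtain ⟨w, hw⟩ := not_not.1 (hleafless v)
            exact ⟨w, T.childN_succ' hv hw⟩
        exact (Set.ncard_pos (T.childN_finite n u)).2 hne |>.ne'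
      let s : ℕ → X := fun n =>
        ∑ v ∈ S n, lp.single (ENNReal.ofReal q) v ((T.gam u n : ℂ)⁻¹)
      have hsapp : ∀ n v, s n v = if v ∈ S n then (T.gam u n : ℂ)⁻¹ else 0 := by
        intro n v
        exact lp_sum_single_apply _ _ _ _
      refine ⟨s, ?_, fun n => ?_⟩
      · rw [tendsto_zero_iff_norm_tendsto_zero]
        have hnorm : ∀ n, ‖s n‖ = ((T.gam u n : ℝ) ^ (1 - q)) ^ (1 / q) := by
          intro n
          have := lp.norm_sum_single (p := ENNReal.ofReal q) (E := fun _ : V => ℂ)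
            (by rw [hq0]; linarith) (fun _ => ((T.gam u n : ℂ)⁻¹)) (S n)
          rw [hq0] at this
          have hg : (0 : ℝ) < T.gam u n := by
            exact_mod_cast Nat.pos_of_ne_zero (hgpos n)
          have h2 : ‖s n‖ ^ q = (T.gam u n : ℝ) ^ (1 - q) := by
            refine this.trans ?_
            rw [Finset.sum_const, hScard, nsmul_eq_mul, norm_inv, Complex.norm_natCast,
              Real.inv_rpow hg.le, Real.rpow_sub hg, Real.rpow_one, div_eq_mul_inv]
          rw [← h2, one_div, Real.rpow_rpow_inv (norm_nonneg _) (by linarith)]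
        simp_rw [hnorm]
        have ht : Tendsto (fun n => (T.gam u n : ℝ) ^ (1 - q)) atTop (nhds 0) := by
          have := (tendsto_rpow_neg_atTop (y := q - 1) (by linarith)).comp
            (tendsto_natCast_atTop_atTop (R := ℝ) |>.comp hgt)
          simpa [Function.comp_def] using this
        have := ht.rpow_const (p := 1 / q) (Or.inr (by positivity))
        rwa [Real.zero_rpow (by positivity)] at this
      · apply lp.ext
        rw [hBn]
        ext x
        rw [T.bwd_iter]
        by_cases hx : x = u
        · subst hx
          rw [finsum_mem_eq_finite_toFinset_sum _ (T.childN_finite n x)]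
          have : ∀ v ∈ (T.childN_finite n x).toFinset, s n v = (T.gam x n : ℂ)⁻¹ := by
            intro v hv
            rw [hsapp, if_pos hv]
          rw [Finset.sum_congr rfl this, Finset.sum_const]
          have hc : ((T.childN_finite n x).toFinset).card = T.gam x n := hScard n
          rw [hc, nsmul_eq_mul, mul_inv_cancel₀ (by exact_mod_cast hgpos n)]
          exact (lp.single_apply_self (E := fun _ : V => ℂ) (ENNReal.ofReal q) x (1 : ℂ)).symm
        · rw [finsum_mem_eq_zero_of_forall_eq_zero]
          · exact (lp.single_apply_ne (E := fun _ : V => ℂ) (ENNReal.ofReal q) u (1 : ℂ) hx).symm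
          · intro v hv
            rw [hsapp, if_neg]
            intro hvS
            exact hx (T.childN_unique hv ((T.childN_finite n u).mem_toFinset.1 hvS))
    | zero => exact ⟨fun _ => 0, tendsto_const_nhds, by simp⟩
    | add x y _ _ hx hy =>
      obtain ⟨s, hs, hs'⟩ := hx
      obtain ⟨t, ht, ht'⟩ := hy
      exact ⟨fun n => s n + t n, by simpa using hs.add ht, fun n => by
        rw [map_add, hs', ht']⟩
    | smul a x _ hx =>
      obtain ⟨s, hs, hs'⟩ := hx
      exact ⟨fun n => a • s n, by simpa using hs.const_smul a, fun n => by
        rw [map_smul, hs']⟩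
  obtain ⟨f, hf⟩ := hc_criterion B (D : Set X) hD h0 h1
  refine ⟨f, (memLp'_iff hq _).2 (lp.memℓp f), fun g hg ε hε => ?_⟩
  let g' : X := ⟨g, (memLp'_iff hq g).1 hg⟩
  obtain ⟨n, hn⟩ := hf g' ε hε
  have hcoe : T.bwd^[n] f - g = (((B ^ n) f - g' : X) : V → ℂ) := by
    rw [lp.coeFn_sub, hBn]
  refine ⟨n, ?_, ?_⟩
  · rw [hcoe]
    exact (memLp'_iff hq _).2 (lp.memℓp _)
  · rw [hcoe, pNorm_eq hq]
    exact hn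

/-- For a leafless rooted directed tree, `1 < q < ∞`, constant
weights `λ_v = 1`, and bounded backward shift `B` on `L^q`: `B` is hypercyclic
if and only if the tree has no free ends. -/
theorem stmt_13 {V : Type} [Countable V] [Infinite V] (T : DirTree V)
    (hleafless : ∀ u : V, ¬ T.IsLeaf u) (hroot : ∃ r : V, T.IsRoot r)
    (q : ℝ) (hq : 1 < q)
    (hb : BoundedOn (fun _ : V => (1 : ℝ)) q T.bwd) :
    Hypercyclic (fun _ : V => (1 : ℝ)) q T.bwd ↔ ¬ T.FreeEnd := by
  exact ⟨not_freeEnd_of_hc T hleafless q hq,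
    hc_of_not_freeEnd T hleafless hroot q hq hb⟩
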